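/- Let ν be a probability measure on 𝕋 with a density (still denoted ν) with respect to λ that is a-Hölder with constant A, i.e. |ν(x)−ν(y)| ≤ A d(x,y)^a for all x,y, where a ∈ (0,1] and A > 0. Take p = 1, so the generator is L_{α,β}f(x) = ½ f''(x) + α^{−1} ∫_𝕋 [f(x + (αβ/2)·σ(x,y)) − f(x)] ν(dy). Then there exists a constant C > 0, depending only on A, such that for every β ≥ 1 and every α ∈ (0, π β^{−2}) there exists a bounded measurable function h : 𝕋 → ℝ with ∫_𝕋 L_{α,β}φ dμ_β = ∫_𝕋 φ·h dμ_β for all φ ∈ C²(𝕋), and with ess sup_x |h(x)| ≤ C·max(αβ⁴, α^a β^{1+a}). -/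

import Mathlib

open MeasureTheory Real Set Filter

noncomputable section

instance : Fact (0 < 2 * π) := ⟨Real.two_pi_pos⟩

/-- The circle `𝕋 = ℝ/(2πℤ)`. -/
abbrev 𝕋 : Type := AddCircle (2 * π)

/-- The normalized Haar probability measure `λ` on the circle. -/
def lam : Measure 𝕋 := (ENNReal.ofReal (2 * π))⁻¹ • volume

/-- The representative of a point of the circle in `(-π, π]`. -/
def rep (z : 𝕋) : ℝ := ((AddCircle.equivIoc (2 * π) (-π) z : Set.Ioc (-π) (-π + 2 * π)) : ℝ)

/-- `σ(x,y) = +1` if the representative of `y - x` lies in `[0, π]`, `-1` otherwise. -/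
def sgn (x y : 𝕋) : ℝ := if 0 ≤ rep (y - x) then 1 else -1

/-- The potential `U₁(x) = ∫ d(x,y) ν(dy)`. -/
def U1 (ν : Measure 𝕋) (x : 𝕋) : ℝ := ∫ y, dist x y ∂ν

/-- The normalizing constant `Z_β = ∫ exp(-β U₁) dλ`. -/
def Z1 (ν : Measure 𝕋) (β : ℝ) : ℝ := ∫ x, Real.exp (-β * U1 ν x) ∂lam

/-- The Gibbs measure `μ_β` with density `exp(-β U₁)/Z_β` w.r.t. `λ`. -/
def gibbs1 (ν : Measure 𝕋) (β : ℝ) : Measure 𝕋 :=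
  lam.withDensity fun x => ENNReal.ofReal (Real.exp (-β * U1 ν x) / Z1 ν β)

/-- The generator for `p = 1`, acting on (the periodic lift) `φ` of a `C²` function on `𝕋`:
`L_{α,β}φ(x) = ½ φ''(x) + α⁻¹ ∫ [φ(x + (αβ/2)σ(x,y)) - φ(x)] ν(dy)`. -/
def gen1 (ν : Measure 𝕋) (α β : ℝ) (φ : ℝ → ℝ) (z : 𝕋) : ℝ :=
  (1 / 2) * deriv (deriv φ) (rep z)
    + α⁻¹ * ∫ y, (φ (rep z + α * β / 2 * sgn z y) - φ (rep z)) ∂ν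

lemma rep_coe {s : ℝ} (hs : s ∈ Ioc (-π) π) : rep (s : 𝕋) = s := by
  unfold rep
  rw [AddCircle.equivIoc_coe_of_mem]
  constructor <;> linarith [hs.1, hs.2]

lemma coe_rep (z : 𝕋) : ((rep z : ℝ) : 𝕋) = z := AddCircle.coe_equivIoc

lemma measurable_rep : Measurable rep :=
  measurable_subtype_coe.comp (AddCircle.measurableEquivIoc (2 * π) (-π)).measurable

lemma integral_lam (f : 𝕋 → ℝ) : ∫ z, f z ∂lam = (2 * π)⁻¹ * ∫ s in (-π)..π, f (s : 𝕋) := by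
  unfold lam
  rw [integral_smul_measure, ← AddCircle.integral_preimage (2 * π) (-π) f,
    intervalIntegral.integral_of_le (by linarith [Real.pi_pos])]
  rw [show -π + 2 * π = π by ring]
  rw [ENNReal.toReal_inv, ENNReal.toReal_ofReal Real.two_pi_pos.le, smul_eq_mul]

lemma integral_lam_rep (f : 𝕋 → ℝ) (F : ℝ → ℝ) (h : ∀ s ∈ Ioc (-π) π, f (s : 𝕋) = F s) :
    ∫ z, f z ∂lam = (2 * π)⁻¹ * ∫ s in (-π)..π, F s := by
  rw [integral_lam]
  congr 1
  apply intervalIntegral.integral_congr_ae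
  refine ae_of_all _ fun s hs => h s ?_
  rwa [uIoc_of_le (by linarith [Real.pi_pos])] at hs

lemma integral_lam_sub (f : 𝕋 → ℝ) (x : 𝕋) : ∫ z, f (z + x) ∂lam = ∫ z, f z ∂lam := by
  unfold lam
  rw [integral_smul_measure, integral_smul_measure, integral_add_right_eq_self f x]

lemma integral_nu (g : 𝕋 → ℝ) (hg : Measurable g) (hg0 : ∀ x, 0 ≤ g x) (F : ℝ → ℝ) (t : ℝ) :
    ∫ y, F (rep (y - (t : 𝕋))) ∂(lam.withDensity (fun y => ENNReal.ofReal (g y)))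
      = (2 * π)⁻¹ * ∫ s in (-π)..π, g ((t + s : ℝ) : 𝕋) * F s := by
  rw [integral_withDensity_eq_integral_toReal_smul (by fun_prop) (by simp),
    ← integral_lam_sub _ (t : 𝕋)]
  apply integral_lam_rep
  intro s hs
  simp only [add_sub_cancel_right, rep_coe hs, ENNReal.toReal_ofReal (hg0 _), smul_eq_mul]
  rw [AddCircle.coe_add, add_comm]

lemma dist_coe (t : ℝ) (y : 𝕋) : dist (t : 𝕋) y = |rep (y - (t : 𝕋))| := by
  rw [dist_comm, dist_eq_norm]
  conv_lhs => rw [← coe_rep (y - (t : 𝕋))]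
  rw [AddCircle.norm_coe_eq_abs_iff _ Real.two_pi_pos.ne', abs_of_pos Real.two_pi_pos]
  have h := (AddCircle.equivIoc (2 * π) (-π) (y - (t : 𝕋))).2
  have h1 : -π < rep (y - (t : 𝕋)) := h.1
  have h2 : rep (y - (t : 𝕋)) ≤ -π + 2 * π := h.2
  rw [abs_le]; constructor <;> linarith

lemma dist_coe_le (x y : ℝ) : dist (x : 𝕋) (y : 𝕋) ≤ |x - y| := by
  rw [dist_eq_norm, ← AddCircle.coe_sub]
  exact QuotientAddGroup.norm_mk_le_norm

/- real-line functions -/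
def JJ (G : ℝ → ℝ) (x : ℝ) : ℝ := ∫ s in (0:ℝ)..x, G s
def KK (G : ℝ → ℝ) (x : ℝ) : ℝ := ∫ s in (0:ℝ)..x, s * G s
def PP (G : ℝ → ℝ) (x : ℝ) : ℝ := (2 * π)⁻¹ * (JJ G (x + π) - JJ G x)
def QQ (G : ℝ → ℝ) (x : ℝ) : ℝ := (2 * π)⁻¹ * (JJ G x - JJ G (x - π))
def uu (G : ℝ → ℝ) (x : ℝ) : ℝ := QQ G x - PP G x
def ww (G : ℝ → ℝ) (x : ℝ) : ℝ := (2 * π)⁻¹ * (2 * G x - G (x + π) - G (x - π))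
def VV (G : ℝ → ℝ) (x : ℝ) : ℝ := (2 * π)⁻¹ * ((KK G (x + π) - KK G x)
  - x * (JJ G (x + π) - JJ G x) + x * (JJ G x - JJ G (x - π)) - (KK G x - KK G (x - π)))

lemma hasDerivAt_JJ {G : ℝ → ℝ} (hG : Continuous G) (x : ℝ) : HasDerivAt (JJ G) (G x) x :=
  intervalIntegral.integral_hasDerivAt_right (hG.intervalIntegrable _ _)
    (hG.stronglyMeasurableAtFilter _ _) hG.continuousAt

lemma hasDerivAt_KK {G : ℝ → ℝ} (hG : Continuous G) (x : ℝ) : HasDerivAt (KK G) (x * G x) x :=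
  hasDerivAt_JJ (G := fun s => s * G s) (by fun_prop) x

lemma continuous_JJ {G : ℝ → ℝ} (hG : Continuous G) : Continuous (JJ G) :=
  continuous_iff_continuousAt.2 fun x => (hasDerivAt_JJ hG x).continuousAt

lemma hasDerivAt_uu {G : ℝ → ℝ} (hG : Continuous G) (x : ℝ) :
    HasDerivAt (uu G) (ww G x) x := by
  have h0 := hasDerivAt_JJ hG x
  have h1 := (hasDerivAt_JJ hG (x + π)).comp_add_const x π
  have h2 := (hasDerivAt_JJ hG (x - π)).comp_sub_const x π
  have := ((h0.sub h2).const_mul (2 * π)⁻¹).sub ((h1.sub h0).const_mul (2 * π)⁻¹)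
  refine this.congr_deriv ?_
  unfold ww; ring

lemma hasDerivAt_VV {G : ℝ → ℝ} (hG : Continuous G) (hp : Function.Periodic G (2 * π)) (x : ℝ) :
    HasDerivAt (VV G) (uu G x) x := by
  have h0 := hasDerivAt_JJ hG x
  have h1 := (hasDerivAt_JJ hG (x + π)).comp_add_const x π
  have h2 := (hasDerivAt_JJ hG (x - π)).comp_sub_const x π
  have k0 := hasDerivAt_KK hG x
  have k1 := (hasDerivAt_KK hG (x + π)).comp_add_const x π
  have k2 := (hasDerivAt_KK hG (x - π)).comp_sub_const x π
  have hi := hasDerivAt_id x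
  have := ((((k1.sub k0).sub (hi.mul (h1.sub h0))).add (hi.mul (h0.sub h2))).sub
    (k0.sub k2)).const_mul (2 * π)⁻¹
  refine this.congr_deriv ?_
  have e : G (x + π) = G (x - π) := by
    rw [← hp (x - π)]; congr 1; ring
  unfold uu PP QQ
  simp only [id, Pi.sub_apply, e]; ring

lemma JJ_sub {G : ℝ → ℝ} (hG : Continuous G) (x y : ℝ) : JJ G y - JJ G x = ∫ s in x..y, G s :=
  intervalIntegral.integral_interval_sub_left (hG.intervalIntegrable _ _)
    (hG.intervalIntegrable _ _)
lemma KK_sub {G : ℝ → ℝ} (hG : Continuous G) (x y : ℝ) : KK G y - KK G x = ∫ s in x..y, s * G s :=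
  JJ_sub (G := fun s => s * G s) (by fun_prop) x y

lemma shift_int {G : ℝ → ℝ} (t a b : ℝ) : ∫ s in a..b, G (t + s) = ∫ s in (t+a)..(t+b), G s := by
  simp

lemma int_abs {G : ℝ → ℝ} (hG : Continuous G) (t : ℝ) :
    (2 * π)⁻¹ * ∫ s in (-π)..π, G (t + s) * |s| = VV G t := by
  unfold VV
  congr 1
  rw [JJ_sub hG, JJ_sub hG, KK_sub hG, KK_sub hG]
  have hc : Continuous fun s => G (t + s) * |s| := by fun_prop
  rw [← intervalIntegral.integral_add_adjacent_intervals (b := 0)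
    (hc.intervalIntegrable _ _) (hc.intervalIntegrable _ _)]
  have e1 : ∫ s in (0:ℝ)..π, G (t + s) * |s| = ∫ s in t..(t+π), (s * G s - t * G s) := by
    have := shift_int (G := fun s => s * G s - t * G s) t 0 π
    rw [add_zero] at this
    rw [← this]
    apply intervalIntegral.integral_congr
    intro s hs
    rw [uIcc_of_le Real.pi_pos.le] at hs
    simp only [abs_of_nonneg hs.1]; ring
  have e2 : ∫ s in (-π)..0, G (t + s) * |s| = ∫ s in (t-π)..t, (t * G s - s * G s) := by
    have := shift_int (G := fun s => t * G s - s * G s) t (-π) 0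
    rw [add_zero, ← sub_eq_add_neg] at this
    rw [← this]
    apply intervalIntegral.integral_congr
    intro s hs
    rw [uIcc_of_le (by linarith [Real.pi_pos])] at hs
    simp only [abs_of_nonpos hs.2]; ring
  have hc1 : Continuous fun s => s * G s := by fun_prop
  have hc2 : Continuous fun s => t * G s := by fun_prop
  rw [e1, e2, intervalIntegral.integral_sub (hc1.intervalIntegrable _ _)
    (hc2.intervalIntegrable _ _), intervalIntegral.integral_sub (hc2.intervalIntegrable _ _)
    (hc1.intervalIntegrable _ _), intervalIntegral.integral_const_mul,
    intervalIntegral.integral_const_mul]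
  ring

lemma int_sgn {G : ℝ → ℝ} (hG : Continuous G) (t c d : ℝ) :
    (2 * π)⁻¹ * ∫ s in (-π)..π, G (t + s) * (if 0 ≤ s then c else d)
      = PP G t * c + QQ G t * d := by
  unfold PP QQ
  rw [JJ_sub hG, JJ_sub hG]
  have e1 : EqOn (fun s => G (t + s) * c) (fun s => G (t + s) * (if 0 ≤ s then c else d))
      (Ioo 0 π) := fun s hs => by simp [hs.1.le]
  have e2 : EqOn (fun s => G (t + s) * d) (fun s => G (t + s) * (if 0 ≤ s then c else d))
      (Ioo (-π) 0) := fun s hs => by simp [not_le.2 hs.2]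
  have n : -π ≤ 0 := by linarith [Real.pi_pos]
  have c1 : Continuous fun s => G (t + s) * c := by fun_prop
  have c2 : Continuous fun s => G (t + s) * d := by fun_prop
  have i1 := (c1.intervalIntegrable (μ := volume) 0 π).congr_uIoo (by rwa [uIoo_of_le Real.pi_pos.le])
  have i2 := (c2.intervalIntegrable (μ := volume) (-π) 0).congr_uIoo (by rwa [uIoo_of_le n])
  rw [← intervalIntegral.integral_add_adjacent_intervals i2 i1]
  rw [← intervalIntegral.integral_congr_Ioo_of_le n e2,
    ← intervalIntegral.integral_congr_Ioo_of_le Real.pi_pos.le e1,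
    intervalIntegral.integral_mul_const, intervalIntegral.integral_mul_const, shift_int, shift_int]
  rw [add_zero, ← sub_eq_add_neg]; ring

lemma mvt {f f' : ℝ → ℝ} (hf : ∀ x, HasDerivAt f (f' x) x) (x δ : ℝ) :
    ∃ ξ, |ξ - x| ≤ |δ| ∧ f (x + δ) - f x = δ * f' ξ := by
  have hc : Continuous f := continuous_iff_continuousAt.2 fun x => (hf x).continuousAt
  rcases lt_trichotomy δ 0 with h | h | h
  · obtain ⟨c, hc, e⟩ := exists_hasDerivAt_eq_slope f f' (show x + δ < x by linarith)
      hc.continuousOn (fun x _ => hf x)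
    refine ⟨c, ?_, ?_⟩
    · rw [abs_of_neg h, abs_le]; constructor <;> linarith [hc.1, hc.2]
    · rw [e, show x - (x + δ) = -δ by ring]; field_simp [h.ne]; ring
  · exact ⟨x, by simp, by simp [h]⟩
  · obtain ⟨c, hc, e⟩ := exists_hasDerivAt_eq_slope f f' (show x < x + δ by linarith)
      hc.continuousOn (fun x _ => hf x)
    refine ⟨c, ?_, ?_⟩
    · rw [abs_of_pos h, abs_le]; constructor <;> linarith [hc.1, hc.2]
    · rw [e]; simp; field_simp

lemma exp_bd {E : ℝ} (hE : |E| ≤ 2) : |Real.exp E - 1 - E| ≤ Real.exp 2 * E ^ 2 := by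
  have h := Complex.norm_exp_sub_sum_le_norm_mul_exp (E : ℂ) 2
  simp only [Finset.sum_range_succ, Finset.sum_range_zero] at h
  simp only [pow_zero, Nat.factorial, zero_add, Nat.cast_one, pow_one, div_one,
    mul_one, Complex.norm_real, Real.norm_eq_abs, sq_abs] at h
  have e : Complex.exp E - (1 + (E:ℂ)) = ((Real.exp E - 1 - E : ℝ) : ℂ) := by push_cast; ring
  rw [e, Complex.norm_real, Real.norm_eq_abs] at h
  refine h.trans ?_
  rw [mul_comm]
  gcongr

lemma side {u u1 w E S A β ε : ℝ} (hu : |u| ≤ 1) (hu1 : |u1| ≤ 1) (hβ : 0 ≤ β) (hε : 0 ≤ ε)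
    (hA : 0 ≤ A)
    (h1 : |u1 - (u - ε * w)| ≤ S) (h2 : |u1 - u| ≤ A * ε) (h3 : |E - β * ε * u| ≤ β * A * ε ^ 2)
    (h4 : |E| ≤ β * ε) (h5 : β * ε ≤ 2) :
    |(1 - u1) * Real.exp E - (1 - u + ε * w) - (1 - u) * (β * ε * u)|
      ≤ S + 3 * A * (β * ε ^ 2) + 2 * Real.exp 2 * (β ^ 2 * ε ^ 2) := by
  have h6 := exp_bd (h4.trans h5)
  have h7 : E ^ 2 ≤ β ^ 2 * ε ^ 2 := by
    rw [← mul_pow, ← sq_abs E]; gcongr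
  have h8 : |Real.exp E - 1 - E| ≤ Real.exp 2 * (β ^ 2 * ε ^ 2) := h6.trans (by gcongr)
  have a1 : |1 - u1| ≤ 2 := by rw [abs_le] at *; constructor <;> linarith
  have e : (1 - u1) * Real.exp E - (1 - u + ε * w) - (1 - u) * (β * ε * u)
      = -(u1 - (u - ε * w)) + -((u1 - u) * (β * ε * u))
        + (1 - u1) * ((Real.exp E - 1 - E) + (E - β * ε * u)) := by ring
  rw [e]
  have b1 : |(u1 - u) * (β * ε * u)| ≤ A * ε * (β * ε * 1) := by
    rw [abs_mul, abs_mul (β * ε), abs_of_nonneg (mul_nonneg hβ hε)]; gcongr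
  have b2 : |(1 - u1) * ((Real.exp E - 1 - E) + (E - β * ε * u))|
      ≤ 2 * (Real.exp 2 * (β ^ 2 * ε ^ 2) + β * A * ε ^ 2) := by
    rw [abs_mul]
    gcongr
    exact (abs_add_le _ _).trans (add_le_add h8 h3)
  refine (abs_add_three _ _ _).trans ?_
  rw [abs_neg, abs_neg]
  linarith

lemma ibp_per {f g f' g' : ℝ → ℝ} (hf : ∀ x, HasDerivAt f (f' x) x)
    (hg : ∀ x, HasDerivAt g (g' x) x) (cf : Continuous f') (cg : Continuous g')
    (pf : Function.Periodic f (2 * π)) (pg : Function.Periodic g (2 * π)) :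
    ∫ x in (-π)..π, f x * g' x = - ∫ x in (-π)..π, f' x * g x := by
  rw [intervalIntegral.integral_mul_deriv_eq_deriv_mul (fun x _ => hf x) (fun x _ => hg x)
    (cf.intervalIntegrable _ _) (cg.intervalIntegrable _ _)]
  have e1 : f π = f (-π) := by rw [← pf (-π)]; congr 1; ring
  have e2 : g π = g (-π) := by rw [← pg (-π)]; congr 1; ring
  rw [e1, e2]; ring

lemma per_shift {f : ℝ → ℝ} (pf : Function.Periodic f (2 * π)) (e : ℝ) :
    ∫ x in (-π)..π, f (x + e) = ∫ x in (-π)..π, f x := by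
  rw [intervalIntegral.integral_comp_add_right]
  have := pf.intervalIntegral_add_eq (-π + e) (-π)
  rw [show -π + e + 2 * π = π + e by ring, show -π + 2 * π = π by ring] at this
  exact this

lemma deriv_per {f : ℝ → ℝ} {c : ℝ} (pf : Function.Periodic f c) : Function.Periodic (deriv f) c := by
  intro x
  rw [← deriv_comp_add_const]
  congr 1
  funext y; exact pf y

def HH (G : ℝ → ℝ) (α β : ℝ) (x : ℝ) : ℝ :=
  1 / 2 * (β ^ 2 * uu G x ^ 2 - β * ww G x)
    + α⁻¹ * (PP G (x - α * β / 2) * Real.exp (β * (VV G x - VV G (x - α * β / 2)))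
      + QQ G (x + α * β / 2) * Real.exp (β * (VV G x - VV G (x + α * β / 2))) - 1)

lemma JJ_per {G : ℝ → ℝ} (hG : Continuous G) (hp : Function.Periodic G (2 * π)) (x y : ℝ) :
    JJ G (x + 2 * π) - JJ G (y + 2 * π) = JJ G x - JJ G y := by
  rw [JJ_sub hG, JJ_sub hG, ← intervalIntegral.integral_comp_add_right]
  simp only [hp _]

lemma PP_per {G : ℝ → ℝ} (hG : Continuous G) (hp : Function.Periodic G (2 * π)) :
    Function.Periodic (PP G) (2 * π) := by
  intro x; unfold PP
  rw [show x + 2 * π + π = x + π + 2 * π by ring, JJ_per hG hp]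

lemma QQ_per {G : ℝ → ℝ} (hG : Continuous G) (hp : Function.Periodic G (2 * π)) :
    Function.Periodic (QQ G) (2 * π) := by
  intro x; unfold QQ
  rw [show x + 2 * π - π = x - π + 2 * π by ring, JJ_per hG hp]

lemma cont_PP {G : ℝ → ℝ} (hG : Continuous G) : Continuous (PP G) := by
  have := continuous_JJ hG
  unfold PP; fun_prop
lemma cont_QQ {G : ℝ → ℝ} (hG : Continuous G) : Continuous (QQ G) := by
  have := continuous_JJ hG
  unfold QQ; fun_prop
lemma cont_uu {G : ℝ → ℝ} (hG : Continuous G) : Continuous (uu G) := by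
  have := cont_PP hG
  have := cont_QQ hG
  unfold uu; fun_prop
lemma cont_ww {G : ℝ → ℝ} (hG : Continuous G) : Continuous (ww G) := by
  unfold ww; fun_prop
lemma cont_VV {G : ℝ → ℝ} (hG : Continuous G) (hp : Function.Periodic G (2 * π)) :
    Continuous (VV G) :=
  continuous_iff_continuousAt.2 fun x => (hasDerivAt_VV hG hp x).continuousAt
lemma cont_HH {G : ℝ → ℝ} (hG : Continuous G) (hp : Function.Periodic G (2 * π)) (α β : ℝ) :
    Continuous (HH G α β) := by
  have := cont_PP hG
  have := cont_QQ hG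
  have := cont_uu hG
  have := cont_ww hG
  have := cont_VV hG hp
  unfold HH; fun_prop

lemma ident {G : ℝ → ℝ} (hG : Continuous G) (hp : Function.Periodic G (2 * π))
    (hV : Function.Periodic (VV G) (2 * π)) (hPQ : ∀ x, PP G x + QQ G x = 1) (α β : ℝ)
    (φ : ℝ → ℝ) (pφ : Function.Periodic φ (2 * π)) (cφ : ContDiff ℝ 2 φ) :
    ∫ t in (-π)..π, Real.exp (-β * VV G t) * (1 / 2 * deriv (deriv φ) t
      + α⁻¹ * (PP G t * (φ (t + α * β / 2) - φ t) + QQ G t * (φ (t - α * β / 2) - φ t)))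
    = ∫ t in (-π)..π, Real.exp (-β * VV G t) * (φ t * HH G α β t) := by
  have cP := cont_PP hG
  have cQ := cont_QQ hG
  have cu := cont_uu hG
  have cw := cont_ww hG
  have cV := cont_VV hG hp
  set ε := α * β / 2 with hε
  set M : ℝ → ℝ := fun t => Real.exp (-β * VV G t) with hM
  have pM : Function.Periodic M (2 * π) := fun x => by simp only [hM, hV x]
  have cM : Continuous M := by fun_prop
  have dM : ∀ x, HasDerivAt M (-β * uu G x * M x) x := fun x => by
    have := ((hasDerivAt_VV hG hp x).const_mul (-β)).exp
    exact this.congr_deriv (by simp only [hM]; ring)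
  have dM2 : ∀ x, HasDerivAt (fun x => -β * uu G x * M x)
      ((β ^ 2 * uu G x ^ 2 - β * ww G x) * M x) x := fun x => by
    have := ((hasDerivAt_uu hG x).const_mul (-β)).mul (dM x)
    exact this.congr_deriv (by ring)
  have pM2 : Function.Periodic (fun x => -β * uu G x * M x) (2 * π) := fun x => by
    simp only [uu, PP_per hG hp x, QQ_per hG hp x, pM x]
  have c0 : Continuous φ := cφ.continuous
  have cφ1 : ContDiff ℝ 1 (deriv φ) := by
    have : ContDiff ℝ (1 + 1) φ := by norm_num; exact cφ
    exact (contDiff_succ_iff_deriv.1 this).2.2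
  have c1 : Continuous (deriv φ) := cφ1.continuous
  have c2 : Continuous (deriv (deriv φ)) := cφ1.continuous_deriv le_rfl
  have d1 : ∀ x, HasDerivAt φ (deriv φ x) x := fun x =>
    (cφ.differentiable (by norm_num) x).hasDerivAt
  have d2 : ∀ x, HasDerivAt (deriv φ) (deriv (deriv φ) x) x := fun x =>
    (cφ1.differentiable (by norm_num) x).hasDerivAt
  have I1 := ibp_per dM d2 (by fun_prop) c2 pM (deriv_per pφ)
  have I2 := ibp_per dM2 d1 (by fun_prop) c1 pM2 pφ
  rw [I2, neg_neg] at I1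
  have I3 := per_shift (f := fun t => PP G (t - ε) * M (t - ε) * φ t) (fun x => by
    simp only
    rw [show x + 2 * π - ε = x - ε + 2 * π by ring, PP_per hG hp, pM, pφ]) ε
  have I4 := per_shift (f := fun t => QQ G (t + ε) * M (t + ε) * φ t) (fun x => by
    simp only
    rw [show x + 2 * π + ε = x + ε + 2 * π by ring, QQ_per hG hp, pM, pφ]) (-ε)
  simp only [add_sub_cancel_right, ← sub_eq_add_neg, sub_add_cancel] at I3 I4
  have L : ∀ t, M t * (1 / 2 * deriv (deriv φ) t
      + α⁻¹ * (PP G t * (φ (t + ε) - φ t) + QQ G t * (φ (t - ε) - φ t)))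
      = 1 / 2 * (M t * deriv (deriv φ) t) + α⁻¹ * (PP G t * M t * φ (t + ε)
        + QQ G t * M t * φ (t - ε) - M t * φ t) := fun t => by
    linear_combination (-α⁻¹ * M t * φ t) * hPQ t
  have R : ∀ t, M t * (φ t * HH G α β t)
      = 1 / 2 * ((β ^ 2 * uu G t ^ 2 - β * ww G t) * M t * φ t)
        + α⁻¹ * (PP G (t - ε) * M (t - ε) * φ t
        + QQ G (t + ε) * M (t + ε) * φ t - M t * φ t) := fun t => by
    have e1 : M (t - ε) = M t * Real.exp (β * (VV G t - VV G (t - ε))) := by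
      simp only [hM]; rw [← Real.exp_add]; congr 1; ring
    have e2 : M (t + ε) = M t * Real.exp (β * (VV G t - VV G (t + ε))) := by
      simp only [hM]; rw [← Real.exp_add]; congr 1; ring
    rw [e1, e2]; unfold HH; rw [← hε]; ring
  have split : ∀ a b c d : ℝ → ℝ, Continuous a → Continuous b → Continuous c → Continuous d →
      ∫ t in (-π)..π, (1 / 2 * a t + α⁻¹ * (b t + c t - d t))
      = 1 / 2 * (∫ t in (-π)..π, a t) + α⁻¹ * ((∫ t in (-π)..π, b t) + (∫ t in (-π)..π, c t)
        - ∫ t in (-π)..π, d t) := by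
    intro a b c d ha hb hc hd
    have k1 : Continuous fun t => 1 / 2 * a t := by fun_prop
    have k2 : Continuous fun t => α⁻¹ * (b t + c t - d t) := by fun_prop
    have k3 : Continuous fun t => b t + c t := by fun_prop
    rw [intervalIntegral.integral_add (k1.intervalIntegrable _ _) (k2.intervalIntegrable _ _),
      intervalIntegral.integral_const_mul, intervalIntegral.integral_const_mul,
      intervalIntegral.integral_sub (k3.intervalIntegrable _ _) (hd.intervalIntegrable _ _),
      intervalIntegral.integral_add (hb.intervalIntegrable _ _) (hc.intervalIntegrable _ _)]
  refine (intervalIntegral.integral_congr (fun t _ => L t)).trans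
    (Eq.trans ?_ (intervalIntegral.integral_congr (fun t _ => R t)).symm)
  rw [split _ _ _ _ (by fun_prop) (by fun_prop) (by fun_prop) (by fun_prop),
    split _ _ _ _ (by fun_prop) (by fun_prop) (by fun_prop) (by fun_prop), I1, I3, I4]

set_option maxHeartbeats 1000000 in
lemma bound_HH {G : ℝ → ℝ} {A a : ℝ} (hA : 0 < A) (ha : 0 < a) (ha1 : a ≤ 1)
    (hG : Continuous G) (hp : Function.Periodic G (2 * π)) (hG0 : ∀ x, 0 ≤ G x)
    (hPQ : ∀ x, PP G x + QQ G x = 1) (hH : ∀ x y, |G x - G y| ≤ A * |x - y| ^ a)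
    {α β : ℝ} (hβ : 1 ≤ β) (hα : 0 < α) (hαβ : α < π * β⁻¹ ^ 2) (x : ℝ) :
    |HH G α β x| ≤ (2 * A + Real.exp 2) * max (α * β ^ 4) (α ^ a * β ^ (1 + a)) := by
  have hπ := Real.pi_gt_three
  have hπ4 := Real.pi_le_four
  have hβ0 : 0 < β := by linarith
  set ε := α * β / 2 with hε
  have hε0 : 0 < ε := by positivity
  have hβε : β * ε ≤ 2 := by
    have : α * β ^ 2 < π := by
      rw [inv_pow, ← div_eq_mul_inv, lt_div_iff₀ (by positivity)] at hαβ
      exact hαβ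
    rw [hε]; nlinarith
  have P0 : ∀ x, 0 ≤ PP G x := fun x => by
    unfold PP; rw [JJ_sub hG]
    have := intervalIntegral.integral_nonneg (μ := volume) (show x ≤ x + π by linarith)
      (fun s _ => hG0 s)
    positivity
  have Q0 : ∀ x, 0 ≤ QQ G x := fun x => by
    unfold QQ; rw [JJ_sub hG]
    have := intervalIntegral.integral_nonneg (μ := volume) (show x - π ≤ x by linarith)
      (fun s _ => hG0 s)
    positivity
  have u1 : ∀ x, |uu G x| ≤ 1 := fun x => by
    unfold uu; rw [abs_le]; constructor <;> linarith [P0 x, Q0 x, hPQ x]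
  have i2π : (2 * π)⁻¹ * 4 ≤ 1 := by
    rw [inv_mul_le_iff₀ (by positivity)]; linarith
  have i0 : 0 < (2 * π)⁻¹ := by positivity
  have w1 : ∀ x, |ww G x| ≤ A := fun x => by
    have h1 := hH x (x + π)
    have h2 := hH x (x - π)
    rw [show x - (x + π) = -π by ring, abs_neg, abs_of_pos Real.pi_pos] at h1
    rw [show x - (x - π) = π by ring, abs_of_pos Real.pi_pos] at h2
    have h3 : π ^ a ≤ π := by
      calc π ^ a ≤ π ^ (1:ℝ) := Real.rpow_le_rpow_of_exponent_le (by linarith) ha1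
        _ = π := Real.rpow_one _
    have h4 : A * π ^ a ≤ A * π := by gcongr
    unfold ww
    rw [abs_mul, abs_of_pos i0, inv_mul_le_iff₀ (by positivity)]
    rw [show 2 * G x - G (x + π) - G (x - π) = (G x - G (x + π)) + (G x - G (x - π)) by ring]
    refine (abs_add_le _ _).trans ?_
    linarith
  have wH : ∀ x y, |x - y| ≤ ε → |ww G x - ww G y| ≤ A * ε ^ a := fun x y hxy => by
    have key : A * |x - y| ^ a ≤ A * ε ^ a := by gcongr
    have h0 := (hH x y).trans key
    have h1 := (hH (x + π) (y + π))
    have h2 := (hH (x - π) (y - π))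
    rw [add_sub_add_right_eq_sub] at h1
    rw [sub_sub_sub_cancel_right] at h2
    have h1 := h1.trans key
    have h2 := h2.trans key
    have : 0 ≤ A * ε ^ a := by positivity
    unfold ww
    rw [← mul_sub, abs_mul, abs_of_pos i0, inv_mul_le_iff₀ (by positivity)]
    have : |2 * G x - G (x + π) - G (x - π) - (2 * G y - G (y + π) - G (y - π))|
        ≤ 4 * (A * ε ^ a) := by
      rw [abs_le] at *; constructor <;> linarith
    nlinarith
  have one : ∀ δ, |δ| = ε → |uu G (x + δ) - (uu G x + δ * ww G x)| ≤ ε * (A * ε ^ a) ∧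
      |uu G (x + δ) - uu G x| ≤ A * ε ∧
      |β * (VV G x - VV G (x + δ)) - β * (-δ) * uu G x| ≤ β * A * ε ^ 2 ∧
      |β * (VV G x - VV G (x + δ))| ≤ β * ε := by
    intro δ hδ
    obtain ⟨ξ, hξ, e⟩ := mvt (hasDerivAt_uu hG) x δ
    obtain ⟨η, hη, e'⟩ := mvt (hasDerivAt_VV hG hp) x δ
    obtain ⟨ζ, hζ, e''⟩ := mvt (hasDerivAt_uu hG) x (η - x)
    rw [add_sub_cancel] at e''
    rw [hδ] at hξ hη
    refine ⟨?_, ?_, ?_, ?_⟩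
    · rw [show uu G (x + δ) - (uu G x + δ * ww G x) = δ * (ww G ξ - ww G x) by linarith, abs_mul, hδ]
      gcongr
      exact wH _ _ hξ
    · rw [e, abs_mul, hδ, mul_comm]
      gcongr
      exact w1 _
    · rw [show β * (VV G x - VV G (x + δ)) - β * (-δ) * uu G x
        = -(β * δ * ((η - x) * ww G ζ)) by rw [← e'']; linear_combination (-β) * e', abs_neg]
      rw [abs_mul, abs_mul, abs_mul, hδ, abs_of_pos hβ0]
      calc β * ε * (|η - x| * |ww G ζ|) ≤ β * ε * (ε * A) := by
            gcongr
            exact w1 _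
        _ = _ := by ring
    · rw [show β * (VV G x - VV G (x + δ)) = -(β * (δ * uu G η)) by rw [← e']; ring, abs_neg,
        abs_mul, abs_mul, hδ, abs_of_pos hβ0]
      have := u1 η
      calc β * (ε * |uu G η|) ≤ β * (ε * 1) := by gcongr
        _ = _ := by ring
  obtain ⟨m1, m2, m3, m4⟩ := one (-ε) (by rw [abs_neg, abs_of_pos hε0])
  obtain ⟨p1, p2, p3, p4⟩ := one ε (abs_of_pos hε0)
  rw [← sub_eq_add_neg] at m1 m2 m3 m4
  have s1 := side (w := ww G x) (S := ε * (A * ε ^ a)) (u1 x) (u1 (x - ε)) hβ0.le hε0.le hA.le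
    (by convert m1 using 2; ring) m2 (by convert m3 using 2; ring) m4 hβε
  have s2 := side (u := -uu G x) (u1 := -uu G (x + ε)) (w := ww G x) (S := ε * (A * ε ^ a))
    (by rw [abs_neg]; exact u1 x) (by rw [abs_neg]; exact u1 (x + ε)) hβ0.le hε0.le hA.le
    (by rw [← abs_neg]; convert p1 using 2; ring) (by rw [← abs_neg]; convert p2 using 2; ring)
    (by convert p3 using 2; ring) p4 hβε
  have eP : PP G (x - ε) = (1 - uu G (x - ε)) / 2 := by unfold uu; linarith [hPQ (x - ε)]
  have eQ : QQ G (x + ε) = (1 - - uu G (x + ε)) / 2 := by unfold uu; linarith [hPQ (x + ε)]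
  set X1 := (1 - uu G (x - ε)) * Real.exp (β * (VV G x - VV G (x - ε)))
    - (1 - uu G x + ε * ww G x) - (1 - uu G x) * (β * ε * uu G x) with hX1
  set X2 := (1 - -uu G (x + ε)) * Real.exp (β * (VV G x - VV G (x + ε)))
    - (1 - -uu G x + ε * ww G x) - (1 - -uu G x) * (β * ε * -uu G x) with hX2
  have eH : HH G α β x = α⁻¹ * ((X1 + X2) / 2) := by
    unfold HH
    rw [← hε, eP, eQ, hX1, hX2]
    have : α⁻¹ * ε = β / 2 := by rw [hε]; field_simp
    linear_combination (-(β * uu G x ^ 2 - ww G x)) * this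
  rw [eH, abs_mul, abs_of_pos (inv_pos.2 hα)]
  have hX : |(X1 + X2) / 2| ≤ ε * (A * ε ^ a) + 3 * A * (β * ε ^ 2)
      + 2 * Real.exp 2 * (β ^ 2 * ε ^ 2) := by
    rw [abs_le] at *; constructor <;> linarith
  have t1 : α⁻¹ * (ε * (A * ε ^ a)) ≤ A / 2 * (α ^ a * β ^ (1 + a)) := by
    have : ε ^ a ≤ α ^ a * β ^ a := by
      rw [← Real.mul_rpow hα.le hβ0.le]
      apply Real.rpow_le_rpow hε0.le _ ha.le
      rw [hε]; have := mul_pos hα hβ0; linarith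
    rw [Real.rpow_add hβ0, Real.rpow_one]
    calc α⁻¹ * (ε * (A * ε ^ a)) ≤ α⁻¹ * (ε * (A * (α ^ a * β ^ a))) := by gcongr
      _ = _ := by rw [hε]; field_simp
  have t2 : α⁻¹ * (β * ε ^ 2) ≤ 1 / 4 * (α * β ^ 4) := by
    have : α⁻¹ * (β * ε ^ 2) = 1 / 4 * (α * β ^ 3) := by rw [hε]; field_simp; ring
    rw [this]
    gcongr
    norm_num
  have t3 : α⁻¹ * (β ^ 2 * ε ^ 2) = 1 / 4 * (α * β ^ 4) := by rw [hε]; field_simp; ring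
  set X := max (α * β ^ 4) (α ^ a * β ^ (1 + a))
  have x1 : α * β ^ 4 ≤ X := le_max_left _ _
  have x2 : α ^ a * β ^ (1 + a) ≤ X := le_max_right _ _
  have x0 : 0 ≤ X := le_trans (by positivity) x1
  have hK := Real.exp_pos 2
  calc α⁻¹ * |(X1 + X2) / 2| ≤ α⁻¹ * (ε * (A * ε ^ a) + 3 * A * (β * ε ^ 2)
      + 2 * Real.exp 2 * (β ^ 2 * ε ^ 2)) := by gcongr
    _ = α⁻¹ * (ε * (A * ε ^ a)) + 3 * A * (α⁻¹ * (β * ε ^ 2))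
      + 2 * Real.exp 2 * (α⁻¹ * (β ^ 2 * ε ^ 2)) := by ring
    _ ≤ A / 2 * X + 3 * A * (1 / 4 * X) + 2 * Real.exp 2 * (1 / 4 * X) := by
      rw [t3]
      have t1' := t1.trans (show _ ≤ A / 2 * X by gcongr)
      have t2' := t2.trans (show _ ≤ 1 / 4 * X by gcongr)
      gcongr
    _ ≤ _ := by nlinarith [mul_nonneg hA.le x0, mul_nonneg hK.le x0]

/-- Proposition `mbl1`: for `p = 1` and a Hölder density, there is a constant
`C = C(A)` such that for `β ≥ 1` and `0 < α < πβ⁻²` the adjoint of `L_{α,β}` in `L²(μ_β)`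
applied to `𝟙` (i.e. the function `h` representing `φ ↦ ∫ L_{α,β}φ dμ_β`) satisfies
`ess sup |h| ≤ C max(αβ⁴, α^a β^{1+a})`. -/
theorem adjoint_one_estimate_p_one (A : ℝ) (hA : 0 < A) :
    ∃ C : ℝ, 0 < C ∧
      ∀ (a : ℝ), 0 < a → a ≤ 1 →
      ∀ (g : 𝕋 → ℝ) (ν : Measure 𝕋), IsProbabilityMeasure ν →
        ν = lam.withDensity (fun y => ENNReal.ofReal (g y)) →
        (∀ x, 0 ≤ g x) →
        (∀ x y : 𝕋, |g x - g y| ≤ A * dist x y ^ a) →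
      ∀ (β α : ℝ), 1 ≤ β → 0 < α → α < π * β⁻¹ ^ 2 →
      ∃ h : 𝕋 → ℝ, Measurable h ∧
        (∀ᵐ x ∂lam, |h x| ≤ C * max (α * β ^ 4) (α ^ a * β ^ (1 + a))) ∧
        ∀ φ : ℝ → ℝ, Function.Periodic φ (2 * π) → ContDiff ℝ 2 φ →
          ∫ z, gen1 ν α β φ z ∂(gibbs1 ν β) = ∫ z, φ (rep z) * h z ∂(gibbs1 ν β) := by
  refine ⟨2 * A + Real.exp 2, by positivity, ?_⟩
  intro a ha ha1 g ν hν hνg hg0 hgH β α hβ hα hαβ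
  have hgc : Continuous g := by
    rw [continuous_iff_continuousAt]
    intro x
    rw [ContinuousAt, tendsto_iff_dist_tendsto_zero]
    have h1 : Tendsto (fun y => A * dist y x ^ a) (nhds x) (nhds 0) := by
      have : Continuous fun y => A * dist y x ^ a :=
        continuous_const.mul ((continuous_id.dist continuous_const).rpow_const
          (fun _ => Or.inr ha.le))
      have h := this.tendsto x
      simpa [Real.zero_rpow ha.ne'] using h
    exact squeeze_zero (fun _ => dist_nonneg) (fun y => hgH y x) h1
  set G : ℝ → ℝ := fun t => g (t : 𝕋) with hGdef
  have hG : Continuous G := hgc.comp (AddCircle.continuous_mk' _)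
  have hp : Function.Periodic G (2 * π) := fun x => by
    simp only [hGdef, AddCircle.coe_add_period]
  have hG0 : ∀ x, 0 ≤ G x := fun x => hg0 _
  have hH : ∀ x y, |G x - G y| ≤ A * |x - y| ^ a := fun x y =>
    (hgH _ _).trans (by gcongr; exact dist_coe_le x y)
  have hν1 : ∀ (F : ℝ → ℝ) (t : ℝ), ∫ y, F (rep (y - (t : 𝕋))) ∂ν
      = (2 * π)⁻¹ * ∫ s in (-π)..π, G (t + s) * F s := fun F t => by
    rw [hνg]; exact integral_nu g hgc.measurable hg0 F t
  have hU : ∀ t : ℝ, U1 ν (t : 𝕋) = VV G t := fun t => by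
    unfold U1
    simp only [dist_coe]
    rw [hν1 (fun s => |s|) t]
    exact int_abs hG t
  have hV : Function.Periodic (VV G) (2 * π) := fun x => by
    rw [← hU, ← hU, AddCircle.coe_add_period]
  have hPQ : ∀ x, PP G x + QQ G x = 1 := fun x => by
    have h := hν1 (fun s => if 0 ≤ s then 1 else 1) x
    rw [int_sgn hG] at h
    simpa using h.symm
  have hUc : Continuous (U1 ν) := by
    have : Continuous fun t : ℝ => U1 ν (t : 𝕋) := by
      simp only [hU]; exact cont_VV hG hp
    exact (QuotientAddGroup.isQuotientMap_mk (N := AddSubgroup.zmultiples (2 * π))).continuous_iff.2 this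
  have hZ : 0 ≤ Z1 ν β := integral_nonneg fun _ => (Real.exp_pos _).le
  have hgibbs : ∀ (f : 𝕋 → ℝ) (F : ℝ → ℝ), (∀ s ∈ Ioc (-π) π, f (s : 𝕋) = F s) →
      ∫ z, f z ∂(gibbs1 ν β) = (2 * π)⁻¹ * ((Z1 ν β)⁻¹ * ∫ s in (-π)..π,
        Real.exp (-β * VV G s) * F s) := by
    intro f F hf
    unfold gibbs1
    rw [integral_withDensity_eq_integral_toReal_smul
      (hUc.measurable.const_mul (-β) |>.exp.div_const _ |>.ennreal_ofReal) (by simp), ← intervalIntegral.integral_const_mul]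
    apply integral_lam_rep
    intro s hs
    rw [ENNReal.toReal_ofReal (div_nonneg (Real.exp_pos _).le hZ), hU, hf s hs, smul_eq_mul]
    ring
  refine ⟨fun z => HH G α β (rep z), (cont_HH hG hp α β).measurable.comp measurable_rep,
    ae_of_all _ fun z => bound_HH hA ha ha1 hG hp hG0 hPQ hH hβ hα hαβ _, ?_⟩
  intro φ pφ cφ
  rw [hgibbs (fun z => φ (rep z) * HH G α β (rep z)) (fun t => φ t * HH G α β t)
      (fun s hs => by simp only [rep_coe hs]),
    hgibbs _ (fun t => 1 / 2 * deriv (deriv φ) t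
      + α⁻¹ * (PP G t * (φ (t + α * β / 2) - φ t) + QQ G t * (φ (t - α * β / 2) - φ t))),
    ident hG hp hV hPQ α β φ pφ cφ]
  intro s hs
  unfold gen1
  rw [rep_coe hs, ← int_sgn hG, ← hν1]
  congr 2
  apply integral_congr_ae
  refine ae_of_all _ fun y => ?_
  simp only [sgn]
  split_ifs
  · rw [mul_one]
  · rw [mul_neg_one, ← sub_eq_add_neg]
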